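/- Let a, b > 0, θ ∈ (0,1), and f ∈ 𝒮(ℝⁿ). Then ‖J^{θa}(⟨x⟩^{(1-θ)b} f)‖_{L²} ≤ C ‖⟨x⟩^{b} f‖_{L²}^{1-θ} ‖J^{a} f‖_{L²}^{θ}, where J^s denotes the Bessel potential of order s, i.e., the Fourier multiplier (1+|ξ|²)^{s/2}, and ⟨x⟩ = (1+|x|²)^{1/2}. -/

import Mathlib

open scoped FourierTransform ENNReal
open MeasureTheory

/-- The Bessel potential J^s, i.e. the Fourier multiplier (1+|ξ|²)^{s/2}. -/
noncomputable def Jpot {n : ℕ} (s : ℝ) (f : EuclideanSpace ℝ (Fin n) → ℂ) :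
    EuclideanSpace ℝ (Fin n) → ℂ :=
  𝓕⁻ (fun ξ => ((1 + ‖ξ‖ ^ 2) ^ (s / 2) : ℝ) • 𝓕 f ξ)

open scoped SchwartzMap LineDeriv

/-- The squared Japanese bracket `1 + ‖x‖ ^ 2`. -/
noncomputable def sqBracket {n : ℕ} (x : EuclideanSpace ℝ (Fin n)) : ℝ := 1 + ‖x‖ ^ 2

/-- The imaginary power `(1 + ‖x‖ ^ 2) ^ (i τ)`. -/
noncomputable def imagPower {n : ℕ} (τ : ℝ) (x : EuclideanSpace ℝ (Fin n)) : ℂ :=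
  Complex.exp (τ * Complex.I * Real.log (sqBracket x))

section Weights

variable {n : ℕ}

lemma one_le_sqBracket (x : EuclideanSpace ℝ (Fin n)) : 1 ≤ sqBracket x := by
  simp [sqBracket]

lemma sqBracket_pos (x : EuclideanSpace ℝ (Fin n)) : 0 < sqBracket x :=
  zero_lt_one.trans_le (one_le_sqBracket x)

@[fun_prop]
lemma continuous_sqBracket : Continuous (sqBracket (n := n)) := by
  unfold sqBracket; fun_prop

@[fun_prop]
lemma hasTemperateGrowth_sqBracket_rpow (r : ℝ) :
    (fun x : EuclideanSpace ℝ (Fin n) => sqBracket x ^ r).HasTemperateGrowth :=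
  Function.hasTemperateGrowth_one_add_norm_sq_rpow _ r

@[fun_prop]
lemma hasTemperateGrowth_sqBracket_inv :
    (fun x : EuclideanSpace ℝ (Fin n) => (sqBracket x)⁻¹).HasTemperateGrowth := by
  simpa [Real.rpow_neg_one] using hasTemperateGrowth_sqBracket_rpow (n := n) (-1)

lemma hasFDerivAt_sqBracket (x : EuclideanSpace ℝ (Fin n)) :
    HasFDerivAt (sqBracket (n := n)) ((2 : ℝ) • innerSL ℝ x) x := by
  have h : HasFDerivAt (sqBracket (n := n)) (2 • innerSL ℝ x) x :=
    (hasStrictFDerivAt_norm_sq x).hasFDerivAt.const_add 1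
  rwa [← Nat.cast_smul_eq_nsmul ℝ, Nat.cast_ofNat] at h

lemma hasFDerivAt_log_sqBracket (x : EuclideanSpace ℝ (Fin n)) :
    HasFDerivAt (fun x => Real.log (sqBracket (n := n) x))
      ((sqBracket x)⁻¹ • (2 : ℝ) • innerSL ℝ x) x :=
  (hasFDerivAt_sqBracket x).log (sqBracket_pos x).ne'

@[fun_prop]
lemma hasTemperateGrowth_log_sqBracket :
    (fun x : EuclideanSpace ℝ (Fin n) => Real.log (sqBracket x)).HasTemperateGrowth := by
  refine Function.HasTemperateGrowth.of_fderiv (k := 2) (C := 1) ?_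
    (fun x => (hasFDerivAt_log_sqBracket x).differentiableAt) fun x => ?_
  · rw [funext fun x => (hasFDerivAt_log_sqBracket x).fderiv]
    have h : (fun x : EuclideanSpace ℝ (Fin n) => (2 : ℝ) • innerSL ℝ x).HasTemperateGrowth :=
      ((2 : ℝ) • innerSL ℝ (E := EuclideanSpace ℝ (Fin n))).hasTemperateGrowth
    exact hasTemperateGrowth_sqBracket_inv.smul h
  · rw [Real.norm_of_nonneg (Real.log_nonneg (one_le_sqBracket x))]
    have := Real.log_le_sub_one_of_pos (sqBracket_pos x)
    unfold sqBracket at *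
    nlinarith [norm_nonneg x]

lemma hasTemperateGrowth_exp_mul_I (τ : ℝ) :
    (fun t : ℝ => Complex.exp (τ * Complex.I * t)).HasTemperateGrowth := by
  have hd (n : ℕ) : iteratedDeriv n (fun t : ℝ => Complex.exp (τ * Complex.I * t)) =
      fun t : ℝ => (τ * Complex.I) ^ n * Complex.exp (τ * Complex.I * t) := by
    induction n with
    | zero => simp
    | succ n ih =>
      rw [iteratedDeriv_succ, ih]
      ext t
      have h : HasDerivAt (fun t : ℝ => (τ * Complex.I) * (t : ℂ)) (τ * Complex.I) t := by
        simpa using (Complex.ofRealCLM.hasDerivAt (x := t)).const_mul (τ * Complex.I)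
      rw [(h.cexp.const_mul _).deriv]
      ring
  refine ⟨(contDiff_const.mul Complex.ofRealCLM.contDiff).cexp, fun n => ⟨0, |τ| ^ n, fun t => ?_⟩⟩
  rw [norm_iteratedFDeriv_eq_norm_iteratedDeriv, hd]
  simp [Complex.norm_exp]

@[fun_prop]
lemma hasTemperateGrowth_imagPower (τ : ℝ) :
    (imagPower (n := n) τ).HasTemperateGrowth :=
  (hasTemperateGrowth_exp_mul_I τ).comp hasTemperateGrowth_log_sqBracket

lemma norm_imagPower (τ : ℝ) (x : EuclideanSpace ℝ (Fin n)) : ‖imagPower τ x‖ = 1 := by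
  simp [imagPower, Complex.norm_exp]

lemma hasFDerivAt_imagPower (τ : ℝ) (x : EuclideanSpace ℝ (Fin n)) :
    HasFDerivAt (imagPower (n := n) τ) ((imagPower τ x * (τ * Complex.I)) •
      (Complex.ofRealCLM ∘L ((sqBracket x)⁻¹ • (2 : ℝ) • innerSL ℝ x))) x := by
  have h := ((Complex.ofRealCLM.hasFDerivAt.comp x (hasFDerivAt_log_sqBracket x)).const_mul
    (τ * Complex.I)).cexp
  rwa [smul_smul] at h

/-- The algebra generated by `(1 + ‖x‖ ^ 2)⁻¹` and `x j / (1 + ‖x‖ ^ 2)`. It consists of bounded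
functions and is closed under partial derivatives. -/
inductive IsSymbol : (EuclideanSpace ℝ (Fin n) → ℂ) → Prop
  | const (c : ℂ) : IsSymbol fun _ => c
  | inv : IsSymbol fun x => ((sqBracket x)⁻¹ : ℝ)
  | coord (j : Fin n) : IsSymbol fun x => (x j * (sqBracket x)⁻¹ : ℝ)
  | add {u v : EuclideanSpace ℝ (Fin n) → ℂ} : IsSymbol u → IsSymbol v →
      IsSymbol fun x => u x + v x
  | mul {u v : EuclideanSpace ℝ (Fin n) → ℂ} : IsSymbol u → IsSymbol v →
      IsSymbol fun x => u x * v x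

lemma hasTemperateGrowth_coord (j : Fin n) :
    (fun x : EuclideanSpace ℝ (Fin n) => x j).HasTemperateGrowth :=
  (EuclideanSpace.proj (𝕜 := ℝ) j : EuclideanSpace ℝ (Fin n) →L[ℝ] ℝ).hasTemperateGrowth

lemma IsSymbol.hasTemperateGrowth {u : EuclideanSpace ℝ (Fin n) → ℂ} (hu : IsSymbol u) :
    u.HasTemperateGrowth := by
  induction hu with
  | const c => fun_prop
  | inv => exact Function.Complex.hasTemperateGrowth_ofReal.comp hasTemperateGrowth_sqBracket_inv
  | coord j =>
    exact Function.Complex.hasTemperateGrowth_ofReal.comp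
      ((hasTemperateGrowth_coord j).mul hasTemperateGrowth_sqBracket_inv)
  | add _ _ hu hv => exact hu.add hv
  | mul _ _ hu hv => exact hu.mul hv

lemma abs_coord_le_sqBracket (x : EuclideanSpace ℝ (Fin n)) (j : Fin n) :
    |x j| ≤ sqBracket x := by
  have := PiLp.norm_apply_le x j
  rw [Real.norm_eq_abs] at this
  unfold sqBracket
  nlinarith [sq_nonneg (‖x‖ - 1)]

lemma IsSymbol.bounded {u : EuclideanSpace ℝ (Fin n) → ℂ} (hu : IsSymbol u) :
    ∃ C : ℝ, 0 ≤ C ∧ ∀ x, ‖u x‖ ≤ C := by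
  induction hu with
  | const c => exact ⟨‖c‖, norm_nonneg _, fun _ => le_rfl⟩
  | inv =>
    refine ⟨1, zero_le_one, fun x => ?_⟩
    rw [Complex.norm_real, Real.norm_of_nonneg (inv_nonneg.2 (sqBracket_pos x).le)]
    exact inv_le_one_of_one_le₀ (one_le_sqBracket x)
  | coord j =>
    refine ⟨1, zero_le_one, fun x => ?_⟩
    rw [Complex.norm_real, Real.norm_eq_abs, abs_mul, abs_inv, abs_of_pos (sqBracket_pos x),
      ← div_eq_mul_inv, div_le_one (sqBracket_pos x)]
    exact abs_coord_le_sqBracket x j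
  | add _ _ hu hv =>
    obtain ⟨C, hC, hu⟩ := hu
    obtain ⟨D, hD, hv⟩ := hv
    exact ⟨C + D, by positivity, fun x => (norm_add_le _ _).trans (add_le_add (hu x) (hv x))⟩
  | mul _ _ hu hv =>
    obtain ⟨C, hC, hu⟩ := hu
    obtain ⟨D, hD, hv⟩ := hv
    refine ⟨C * D, by positivity, fun x => ?_⟩
    rw [norm_mul]
    gcongr
    exacts [hu x, hv x]

lemma hasFDerivAt_sqBracket_inv (x : EuclideanSpace ℝ (Fin n)) :
    HasFDerivAt (fun x => (sqBracket (n := n) x)⁻¹)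
      (-(sqBracket x ^ 2)⁻¹ • (2 : ℝ) • innerSL ℝ x) x :=
  (hasDerivAt_inv (sqBracket_pos x).ne').comp_hasFDerivAt x (hasFDerivAt_sqBracket x)

lemma IsSymbol.exists_fderiv {u : EuclideanSpace ℝ (Fin n) → ℂ} (hu : IsSymbol u) (j : Fin n) :
    ∃ v : EuclideanSpace ℝ (Fin n) → ℂ, IsSymbol v ∧
      ∀ x, fderiv ℝ u x (EuclideanSpace.single j 1) = v x := by
  induction hu with
  | const c => exact ⟨fun _ => 0, .const 0, fun x => by simp⟩
  | inv =>
    refine ⟨_, .mul (.const (-2)) (.mul .inv (.coord j)), fun x => ?_⟩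
    have h : HasFDerivAt (fun x : EuclideanSpace ℝ (Fin n) => (((sqBracket x)⁻¹ : ℝ) : ℂ)) _ x :=
      Complex.ofRealCLM.hasFDerivAt.comp x (hasFDerivAt_sqBracket_inv x)
    rw [h.fderiv]
    simp [EuclideanSpace.inner_single_right]
    ring
  | coord i =>
    refine ⟨_, .add (.mul (.const (if i = j then 1 else 0)) .inv)
      (.mul (.const (-2)) (.mul (.coord i) (.coord j))), fun x => ?_⟩
    have hp := (EuclideanSpace.proj (𝕜 := ℝ) i : EuclideanSpace ℝ (Fin n) →L[ℝ] ℝ).hasFDerivAt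
      (x := x)
    have h : HasFDerivAt
        (fun x : EuclideanSpace ℝ (Fin n) => ((x i * (sqBracket x)⁻¹ : ℝ) : ℂ)) _ x :=
      Complex.ofRealCLM.hasFDerivAt.comp x (hp.mul (hasFDerivAt_sqBracket_inv x))
    rw [h.fderiv]
    simp [EuclideanSpace.inner_single_right]
    split_ifs <;> simp <;> ring
  | @add u v hu hv ihu ihv =>
    obtain ⟨u', hu', hu''⟩ := ihu
    obtain ⟨v', hv', hv''⟩ := ihv
    refine ⟨_, hu'.add hv', fun x => ?_⟩
    rw [fderiv_fun_add (hu.hasTemperateGrowth.1.differentiable (by simp) x)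
      (hv.hasTemperateGrowth.1.differentiable (by simp) x)]
    simp [hu'', hv'']
  | @mul u v hu hv ihu ihv =>
    obtain ⟨u', hu', hu''⟩ := ihu
    obtain ⟨v', hv', hv''⟩ := ihv
    refine ⟨_, (hu'.mul hv).add (hu.mul hv'), fun x => ?_⟩
    rw [fderiv_fun_mul (hu.hasTemperateGrowth.1.differentiable (by simp) x)
      (hv.hasTemperateGrowth.1.differentiable (by simp) x)]
    simp [hu'', hv'']
    ring

end Weights

/-- The squared Sobolev norm `∫ (1 + ‖ξ‖ ^ 2) ^ a * ‖𝓕 f ξ‖ ^ 2`. -/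
noncomputable def sobolevSq {n : ℕ} (a : ℝ) (f : 𝓢(EuclideanSpace ℝ (Fin n), ℂ)) : ℝ≥0∞ :=
  ∫⁻ ξ, ENNReal.ofReal (sqBracket ξ ^ a) * ‖𝓕 f ξ‖ₑ ^ 2

/-- The partial derivative normalized so as to correspond to multiplication by `ξ j`. -/
noncomputable def normalizedDeriv {n : ℕ} (j : Fin n) (f : 𝓢(EuclideanSpace ℝ (Fin n), ℂ)) :
    𝓢(EuclideanSpace ℝ (Fin n), ℂ) :=
  (2 * Real.pi * Complex.I)⁻¹ • ∂_{EuclideanSpace.single j (1 : ℝ)} f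

section SobolevSq

variable {n : ℕ}

lemma enorm_add_sq_le {E : Type*} [SeminormedAddCommGroup E] (x y : E) :
    ‖x + y‖ₑ ^ 2 ≤ 2 * (‖x‖ₑ ^ 2 + ‖y‖ₑ ^ 2) := by
  have h : ‖x + y‖₊ ^ 2 ≤ 2 * (‖x‖₊ ^ 2 + ‖y‖₊ ^ 2) := by
    refine (pow_le_pow_left₀ zero_le (nnnorm_add_le x y) 2).trans ?_
    exact add_sq_le
  simpa only [enorm_eq_nnnorm, ← ENNReal.coe_pow, ← ENNReal.coe_add, ← ENNReal.coe_ofNat,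
    ← ENNReal.coe_mul, ENNReal.coe_le_coe] using h

lemma eLpNorm_two_sq {α E : Type*} [MeasurableSpace α] [NormedAddCommGroup E] (μ : Measure α)
    (f : α → E) : eLpNorm f 2 μ ^ 2 = ∫⁻ x, ‖f x‖ₑ ^ 2 ∂μ := by
  rw [eLpNorm_eq_lintegral_rpow_enorm_toReal (by simp) (by simp), ← ENNReal.rpow_natCast,
    ← ENNReal.rpow_mul]
  simp

lemma SchwartzMap.eLpNorm_fourier (f : 𝓢(EuclideanSpace ℝ (Fin n), ℂ)) :
    eLpNorm (𝓕 f : 𝓢(EuclideanSpace ℝ (Fin n), ℂ)) 2 volume = eLpNorm (⇑f) 2 volume := by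
  rw [← ENNReal.toReal_eq_toReal_iff' ((𝓕 f).eLpNorm_lt_top 2 volume).ne
    (f.eLpNorm_lt_top 2 volume).ne,
    ← SchwartzMap.norm_toLp, ← SchwartzMap.norm_toLp]
  exact SchwartzMap.norm_fourier_toL2_eq f

lemma sobolevSq_zero (f : 𝓢(EuclideanSpace ℝ (Fin n), ℂ)) :
    sobolevSq 0 f = ∫⁻ x, ‖f x‖ₑ ^ 2 := by
  rw [← eLpNorm_two_sq, ← f.eLpNorm_fourier, eLpNorm_two_sq]
  simp [sobolevSq]

lemma sobolevSq_smul (a : ℝ) (c : ℂ) (f : 𝓢(EuclideanSpace ℝ (Fin n), ℂ)) :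
    sobolevSq a (c • f) = ‖c‖ₑ ^ 2 * sobolevSq a f := by
  unfold sobolevSq
  rw [← lintegral_const_mul' _ _ (by simp)]
  congr with ξ
  rw [FourierTransform.fourier_smul, smul_apply, smul_eq_mul, enorm_mul]
  ring

@[fun_prop]
lemma measurable_ofReal_sqBracket_rpow (a : ℝ) :
    Measurable fun ξ : EuclideanSpace ℝ (Fin n) => ENNReal.ofReal (sqBracket ξ ^ a) :=
  (hasTemperateGrowth_sqBracket_rpow a).1.continuous.measurable.ennreal_ofReal

@[fun_prop]
lemma SchwartzMap.measurable_enorm_sq (f : 𝓢(EuclideanSpace ℝ (Fin n), ℂ)) :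
    Measurable fun ξ => ‖f ξ‖ₑ ^ 2 :=
  f.continuous.measurable.enorm.pow_const 2

lemma sobolevSq_add_le (a : ℝ) (f g : 𝓢(EuclideanSpace ℝ (Fin n), ℂ)) :
    sobolevSq a (f + g) ≤ 2 * (sobolevSq a f + sobolevSq a g) := by
  unfold sobolevSq
  rw [← lintegral_add_left (by fun_prop), ← lintegral_const_mul _ (by fun_prop)]
  refine lintegral_mono fun ξ => ?_
  rw [FourierTransform.fourier_add, add_apply, ← mul_add, mul_left_comm]
  gcongr
  exact enorm_add_sq_le _ _

lemma fourier_normalizedDeriv (j : Fin n) (f : 𝓢(EuclideanSpace ℝ (Fin n), ℂ))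
    (ξ : EuclideanSpace ℝ (Fin n)) : 𝓕 (normalizedDeriv j f) ξ = ξ j * 𝓕 f ξ := by
  have hI : (2 * Real.pi * Complex.I : ℂ) ≠ 0 := by simp [Real.pi_ne_zero]
  rw [normalizedDeriv, FourierTransform.fourier_smul, SchwartzMap.fourier_lineDerivOp_eq,
    smul_smul, inv_mul_cancel₀ hI, one_smul,
    SchwartzMap.smulLeftCLM_apply_apply (by fun_prop)]
  simp [EuclideanSpace.inner_single_right]

lemma sobolevSq_add_one (a : ℝ) (f : 𝓢(EuclideanSpace ℝ (Fin n), ℂ)) :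
    sobolevSq (a + 1) f = sobolevSq a f + ∑ j, sobolevSq a (normalizedDeriv j f) := by
  unfold sobolevSq
  rw [← lintegral_finsetSum _ (fun j _ => by fun_prop), ← lintegral_add_left (by fun_prop)]
  congr with ξ
  simp_rw [fourier_normalizedDeriv, enorm_mul, mul_pow, ← mul_assoc]
  rw [← Finset.sum_mul, ← Finset.mul_sum, ← add_mul]
  congr 1
  have h (j : Fin n) : ‖(ξ j : ℂ)‖ₑ ^ 2 = ENNReal.ofReal (ξ j ^ 2) := by
    rw [← ofReal_norm, ← ENNReal.ofReal_pow (norm_nonneg _)]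
    simp
  have hw : 0 ≤ sqBracket ξ ^ a := (Real.rpow_pos_of_pos (sqBracket_pos ξ) a).le
  simp_rw [h]
  rw [← ENNReal.ofReal_sum_of_nonneg (fun _ _ => sq_nonneg _), ← ENNReal.ofReal_mul hw,
    ← ENNReal.ofReal_add hw (by positivity), Real.rpow_add (sqBracket_pos ξ), Real.rpow_one]
  congr 1
  rw [sqBracket, EuclideanSpace.real_norm_sq_eq]
  ring

lemma sobolevSq_le_add_one (a : ℝ) (f : 𝓢(EuclideanSpace ℝ (Fin n), ℂ)) :
    sobolevSq a f ≤ sobolevSq (a + 1) f :=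
  (sobolevSq_add_one a f).symm ▸ le_self_add

lemma sobolevSq_normalizedDeriv_le (a : ℝ) (j : Fin n) (f : 𝓢(EuclideanSpace ℝ (Fin n), ℂ)) :
    sobolevSq a (normalizedDeriv j f) ≤ sobolevSq (a + 1) f :=
  (sobolevSq_add_one a f).symm ▸
    (Finset.single_le_sum (f := fun j => sobolevSq a (normalizedDeriv j f))
      (fun _ _ => zero_le) (Finset.mem_univ j)).trans le_add_self

end SobolevSq

section ExpGrowth

/-- Functions growing at most exponentially. -/
def ExpGrowth (B : ℝ → ℝ≥0∞) : Prop :=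
  ∃ C N : ℝ, 0 ≤ C ∧ ∀ τ, B τ ≤ ENNReal.ofReal (C * Real.exp (N * |τ|))

lemma ExpGrowth.const {c : ℝ≥0∞} (hc : c ≠ ∞) : ExpGrowth fun _ => c :=
  ⟨c.toReal, 0, ENNReal.toReal_nonneg, fun τ => by simp [hc]⟩

lemma ExpGrowth.add {A B : ℝ → ℝ≥0∞} (hA : ExpGrowth A) (hB : ExpGrowth B) :
    ExpGrowth fun τ => A τ + B τ := by
  obtain ⟨C, N, hC, hA⟩ := hA
  obtain ⟨D, M, hD, hB⟩ := hB
  refine ⟨C + D, max N M, by positivity, fun τ => ?_⟩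
  rw [add_mul, ENNReal.ofReal_add (by positivity) (by positivity)]
  refine add_le_add ((hA τ).trans ?_) ((hB τ).trans ?_) <;> gcongr
  exacts [le_max_left _ _, le_max_right _ _]

lemma ExpGrowth.mul {A B : ℝ → ℝ≥0∞} (hA : ExpGrowth A) (hB : ExpGrowth B) :
    ExpGrowth fun τ => A τ * B τ := by
  obtain ⟨C, N, hC, hA⟩ := hA
  obtain ⟨D, M, hD, hB⟩ := hB
  refine ⟨C * D, N + M, by positivity, fun τ => (mul_le_mul' (hA τ) (hB τ)).trans ?_⟩
  rw [← ENNReal.ofReal_mul (by positivity), add_mul, Real.exp_add]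
  exact (congrArg _ (by ring)).le

lemma ExpGrowth.sum {ι : Type*} (s : Finset ι) {B : ι → ℝ → ℝ≥0∞}
    (hB : ∀ i, ExpGrowth (B i)) : ExpGrowth fun τ => ∑ i ∈ s, B i τ := by
  classical
  induction s using Finset.induction_on with
  | empty => simpa using ExpGrowth.const (by simp : (0 : ℝ≥0∞) ≠ ∞)
  | insert i s hi ih => simpa [Finset.sum_insert hi] using (hB i).add ih

lemma ExpGrowth.enorm_sq : ExpGrowth fun τ => ‖τ‖ₑ ^ 2 := by
  refine ⟨1, 2, zero_le_one, fun τ => ?_⟩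
  dsimp only
  rw [← ofReal_norm, ← ENNReal.ofReal_pow (norm_nonneg _), Real.norm_eq_abs, one_mul]
  refine ENNReal.ofReal_le_ofReal ?_
  rw [mul_comm, Real.exp_mul, ← Real.rpow_natCast, Nat.cast_ofNat]
  have := Real.add_one_le_exp |τ|
  gcongr
  linarith

end ExpGrowth

section Multiplication

variable {n : ℕ}

/-- Multiplication by `u * (1 + ‖x‖ ^ 2) ^ (i τ)` on Schwartz functions. -/
noncomputable def symbolMul (u : EuclideanSpace ℝ (Fin n) → ℂ) (τ : ℝ)
    (f : 𝓢(EuclideanSpace ℝ (Fin n), ℂ)) : 𝓢(EuclideanSpace ℝ (Fin n), ℂ) :=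
  SchwartzMap.smulLeftCLM ℂ (fun x => u x * imagPower τ x) f

lemma IsSymbol.symbolMul_apply {u : EuclideanSpace ℝ (Fin n) → ℂ} (hu : IsSymbol u) (τ : ℝ)
    (f : 𝓢(EuclideanSpace ℝ (Fin n), ℂ)) (x : EuclideanSpace ℝ (Fin n)) :
    symbolMul u τ f x = u x * imagPower τ x * f x :=
  SchwartzMap.smulLeftCLM_apply_apply (hu.hasTemperateGrowth.mul (hasTemperateGrowth_imagPower τ))
    f x

lemma IsSymbol.normalizedDeriv_symbolMul {u v : EuclideanSpace ℝ (Fin n) → ℂ} (hu : IsSymbol u)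
    (hv : IsSymbol v) {j : Fin n}
    (huv : ∀ x, fderiv ℝ u x (EuclideanSpace.single j 1) = v x)
    (τ : ℝ) (f : 𝓢(EuclideanSpace ℝ (Fin n), ℂ)) :
    normalizedDeriv j (symbolMul u τ f) =
      (2 * Real.pi * Complex.I)⁻¹ • symbolMul v τ f +
      (((τ : ℂ) * (Real.pi : ℂ)⁻¹) •
        symbolMul (fun x => u x * (x j * (sqBracket x)⁻¹ : ℝ)) τ f +
      symbolMul u τ (normalizedDeriv j f)) := by
  ext x
  have h1 := (hu.hasTemperateGrowth.1.differentiable (by simp) x).hasFDerivAt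
  have h : HasFDerivAt (symbolMul u τ f) _ x :=
    (((h1.mul (hasFDerivAt_imagPower τ x)).mul (f.hasFDerivAt x)).congr_of_eventuallyEq
      (.of_forall fun x => hu.symbolMul_apply τ f x))
  simp only [normalizedDeriv, smul_apply, add_apply,
    SchwartzMap.lineDerivOp_apply_eq_fderiv, hu.symbolMul_apply, hv.symbolMul_apply,
    (hu.mul (.coord j)).symbolMul_apply, h.fderiv]
  have hpi : (Real.pi : ℂ) ≠ 0 := by simp [Real.pi_ne_zero]
  have hI := Complex.I_ne_zero
  simp [huv, EuclideanSpace.inner_single_right]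
  field_simp
  ring_nf
  simp only [Complex.I_sq]
  ring

/-- Multiplication by symbols times imaginary powers is bounded on the Sobolev space of order `a`,
with at most exponential growth of the bound. -/
def SymbolMulBounded (n : ℕ) (a : ℝ) : Prop :=
  ∀ u : EuclideanSpace ℝ (Fin n) → ℂ, IsSymbol u → ∃ B : ℝ → ℝ≥0∞, ExpGrowth B ∧
    ∀ (τ : ℝ) (f : 𝓢(EuclideanSpace ℝ (Fin n), ℂ)),
      sobolevSq a (symbolMul u τ f) ≤ B τ * sobolevSq a f

lemma symbolMulBounded_zero : SymbolMulBounded n 0 := by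
  intro u hu
  obtain ⟨C, hC, hb⟩ := hu.bounded
  refine ⟨_, .const (c := ENNReal.ofReal C ^ 2) (by simp), fun τ f => ?_⟩
  rw [sobolevSq_zero, sobolevSq_zero, ← lintegral_const_mul _ (by fun_prop)]
  refine lintegral_mono fun x => ?_
  rw [hu.symbolMul_apply, enorm_mul, mul_pow]
  gcongr
  rw [← ofReal_norm, norm_mul, norm_imagPower, mul_one]
  exact ENNReal.ofReal_le_ofReal (hb x)

lemma SymbolMulBounded.add_one {a : ℝ} (ha : SymbolMulBounded n a) :
    SymbolMulBounded n (a + 1) := by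
  intro u hu
  choose v hv huv using hu.exists_fderiv
  obtain ⟨B, hB, hBu⟩ := ha u hu
  choose B₁ hB₁ hBv using fun j => ha (v j) (hv j)
  choose B₂ hB₂ hBw using fun j => ha _ (hu.mul (.coord j))
  let c : ℝ≥0∞ := ‖(2 * Real.pi * Complex.I : ℂ)⁻¹‖ₑ ^ 2
  let d : ℝ≥0∞ := ‖(Real.pi : ℂ)⁻¹‖ₑ ^ 2
  have hc : c ≠ ∞ := ENNReal.pow_ne_top enorm_ne_top
  have hd : d ≠ ∞ := ENNReal.pow_ne_top enorm_ne_top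
  refine ⟨fun τ => B τ + ∑ j, 2 * (c * B₁ j τ + 2 * (‖τ‖ₑ ^ 2 * d * B₂ j τ + B τ)),
    hB.add (.sum _ fun j => .mul (.const (by simp)) (.add (.mul (.const hc) (hB₁ j))
      (.mul (.const (by simp)) (.add (.mul (.mul .enorm_sq (.const hd)) (hB₂ j)) hB)))),
    fun τ f => ?_⟩
  rw [sobolevSq_add_one, add_mul, Finset.sum_mul]
  have h₀ := sobolevSq_le_add_one a f
  refine add_le_add ((hBu τ f).trans (by gcongr)) (Finset.sum_le_sum fun j _ => ?_)
  rw [hu.normalizedDeriv_symbolMul (hv j) (huv j)]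
  refine (sobolevSq_add_le _ _ _).trans ?_
  rw [mul_assoc (2 : ℝ≥0∞), add_mul, mul_assoc (2 : ℝ≥0∞), add_mul]
  gcongr
  · rw [sobolevSq_smul, mul_assoc c]
    gcongr
    exact (hBv j τ f).trans (by gcongr)
  refine (sobolevSq_add_le _ _ _).trans ?_
  gcongr
  · rw [sobolevSq_smul, enorm_mul, mul_pow, mul_assoc (_ * d)]
    have : ‖(τ : ℂ)‖ₑ = ‖τ‖ₑ := by
      rw [← ofReal_norm, ← ofReal_norm, Complex.norm_real]
    rw [this]
    gcongr
    exact (hBw j τ f).trans (by gcongr)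
  · exact (hBu τ _).trans (by gcongr; exact sobolevSq_normalizedDeriv_le a j f)

end Multiplication

section KFunctional

variable {n : ℕ}

lemma hasTemperateGrowth_div_sqBracket_add {s : ℝ} (hs : 0 < s) :
    (fun x : EuclideanSpace ℝ (Fin n) => s / (sqBracket x + s)).HasTemperateGrowth := by
  let r : ℝ := (√(1 + s))⁻¹
  have hr : r ^ 2 = (1 + s)⁻¹ := by
    rw [inv_pow, Real.sq_sqrt (by positivity)]
  let L : EuclideanSpace ℝ (Fin n) →L[ℝ] EuclideanSpace ℝ (Fin n) :=
    r • ContinuousLinearMap.id ℝ _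
  have h := (hasTemperateGrowth_sqBracket_inv (n := n)).comp L.hasTemperateGrowth
  have h' := (Function.HasTemperateGrowth.const (E := EuclideanSpace ℝ (Fin n))
    (s * (1 + s)⁻¹)).mul h
  refine (congrArg Function.HasTemperateGrowth (funext fun x => ?_)).mpr h'
  simp only [Pi.mul_apply, Function.comp, L, sqBracket, smul_apply,
    ContinuousLinearMap.id_apply, norm_smul, mul_pow, Real.norm_eq_abs, sq_abs, hr]
  have : 0 < 1 + ‖x‖ ^ 2 + s := by positivity
  field_simp
  ring

/-- The `K`-functional (squared, in its diagonalized form) of the couple of Sobolev spaces of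
orders `0` and `1`. -/
noncomputable def kFunctional (s : ℝ) (f : 𝓢(EuclideanSpace ℝ (Fin n), ℂ)) : ℝ≥0∞ :=
  ∫⁻ ξ, ENNReal.ofReal (sqBracket ξ / (sqBracket ξ + s)) * ‖𝓕 f ξ‖ₑ ^ 2

@[fun_prop]
lemma measurable_sqBracket : Measurable (sqBracket (n := n)) :=
  continuous_sqBracket.measurable

lemma kFunctional_add_le {s : ℝ} (hs : 0 < s) (g h : 𝓢(EuclideanSpace ℝ (Fin n), ℂ)) :
    kFunctional s (g + h) ≤
      2 * (sobolevSq 0 g + ENNReal.ofReal s⁻¹ * sobolevSq 1 h) := by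
  unfold kFunctional sobolevSq
  rw [← lintegral_const_mul _ (by fun_prop), ← lintegral_add_left (by fun_prop),
    ← lintegral_const_mul _ (by fun_prop)]
  refine lintegral_mono fun ξ => ?_
  have hw := sqBracket_pos ξ
  dsimp only
  rw [FourierTransform.fourier_add, add_apply, Real.rpow_zero, Real.rpow_one, ← mul_assoc,
    ← ENNReal.ofReal_mul (by positivity)]
  refine (mul_le_mul_right (enorm_add_sq_le _ _) _).trans ?_
  rw [mul_left_comm, mul_add]
  gcongr
  · rw [div_le_one (by positivity)]
    linarith
  · rw [inv_mul_eq_div]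
    gcongr
    linarith

lemma exists_add_eq_kFunctional {s : ℝ} (hs : 0 < s) (f : 𝓢(EuclideanSpace ℝ (Fin n), ℂ)) :
    ∃ g h, f = g + h ∧
      sobolevSq 0 g + ENNReal.ofReal s⁻¹ * sobolevSq 1 h = kFunctional s f := by
  let h : 𝓢(EuclideanSpace ℝ (Fin n), ℂ) :=
    𝓕⁻ (SchwartzMap.smulLeftCLM ℂ (fun x => s / (sqBracket x + s)) (𝓕 f))
  have hh (ξ) : 𝓕 h ξ = (s / (sqBracket ξ + s)) • 𝓕 f ξ := by
    rw [FourierTransform.fourier_fourierInv_eq,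
      SchwartzMap.smulLeftCLM_apply_apply (hasTemperateGrowth_div_sqBracket_add hs)]
  have hg (ξ) : 𝓕 (f - h) ξ = (sqBracket ξ / (sqBracket ξ + s)) • 𝓕 f ξ := by
    have hadd := FourierTransform.fourier_add (f - h) h
    have hw := sqBracket_pos ξ
    rw [sub_add_cancel] at hadd
    have hs' : sqBracket ξ / (sqBracket ξ + s) = 1 - s / (sqBracket ξ + s) := by
      field_simp
      ring
    rw [hs', sub_smul, ← hh, one_smul, hadd, add_apply, add_sub_cancel_right]
  refine ⟨f - h, h, (sub_add_cancel _ _).symm, ?_⟩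
  unfold kFunctional sobolevSq
  rw [← lintegral_const_mul _ (by fun_prop), ← lintegral_add_left (by fun_prop)]
  refine lintegral_congr fun ξ => ?_
  have hw := sqBracket_pos ξ
  have he (r : ℝ) (hr : 0 ≤ r) : ‖r‖ₑ ^ 2 = ENNReal.ofReal (r ^ 2) := by
    rw [ENNReal.ofReal_pow hr, Real.enorm_of_nonneg hr]
  rw [hg, hh, enorm_smul, enorm_smul, mul_pow, mul_pow, Real.rpow_zero, Real.rpow_one,
    he _ (by positivity), he _ (by positivity), ← mul_assoc, ← mul_assoc, ← mul_assoc, ← add_mul,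
    ← ENNReal.ofReal_mul (by positivity), ← ENNReal.ofReal_mul (by positivity),
    ← ENNReal.ofReal_mul (by positivity), ← ENNReal.ofReal_add (by positivity) (by positivity)]
  congr 2
  field_simp

lemma sobolevSq_eq_lintegral_kFunctional {θ : ℝ} (hθ : θ ∈ Set.Ioo (0 : ℝ) 1)
    (f : 𝓢(EuclideanSpace ℝ (Fin n), ℂ)) :
    ENNReal.ofReal (∫ t in Set.Ioi 0, Real.rpowIntegrand₀₁ θ t 1) * sobolevSq θ f =
      ∫⁻ s in Set.Ioi 0, ENNReal.ofReal (s ^ (θ - 1)) * kFunctional s f := by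
  unfold sobolevSq kFunctional
  simp_rw [← lintegral_const_mul' _ _ ENNReal.ofReal_ne_top]
  rw [lintegral_lintegral_swap (by fun_prop)]
  refine lintegral_congr fun ξ => ?_
  have hw := sqBracket_pos ξ
  rw [← mul_assoc, ← ENNReal.ofReal_mul' (by positivity), mul_comm (integral _ _),
    ← Real.integral_rpowIntegrand₀₁_eq_rpow_mul_const hθ hw.le]
  simp_rw [← mul_assoc]
  rw [lintegral_mul_const _ (by fun_prop), ofReal_integral_eq_lintegral_ofReal
    (Real.integrableOn_rpowIntegrand₀₁_Ioi hθ hw.le)]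
  · congr 1
    refine setLIntegral_congr_fun measurableSet_Ioi fun s hs => ?_
    have hs : 0 < s := hs
    rw [← ENNReal.ofReal_mul (by positivity), Real.rpowIntegrand₀₁_eq_pow_div hθ hs.le hw.le,
      mul_div_assoc, add_comm s]
  · filter_upwards [ae_restrict_mem measurableSet_Ioi] with s hs
    exact Real.rpowIntegrand₀₁_nonneg hθ.1 (le_of_lt hs) hw.le

lemma symbolMul_add (u : EuclideanSpace ℝ (Fin n) → ℂ) (τ : ℝ)
    (g h : 𝓢(EuclideanSpace ℝ (Fin n), ℂ)) :
    symbolMul u τ (g + h) = symbolMul u τ g + symbolMul u τ h :=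
  map_add _ _ _

lemma symbolMulBounded_of_mem_Ioo {θ : ℝ} (hθ : θ ∈ Set.Ioo (0 : ℝ) 1) :
    SymbolMulBounded n θ := by
  intro u hu
  obtain ⟨B₀, hB₀, h₀⟩ := symbolMulBounded_zero u hu
  obtain ⟨B₁, hB₁, h₁⟩ := (symbolMulBounded_zero (n := n)).add_one u hu
  rw [zero_add] at h₁
  refine ⟨_, .mul (.const (c := 2) (by simp)) (hB₀.add hB₁), fun τ f => ?_⟩
  have hc : 0 < ∫ t in Set.Ioi 0, Real.rpowIntegrand₀₁ θ t 1 :=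
    Real.integral_rpowIntegrand₀₁_one_pos hθ
  have hB : 2 * (B₀ τ + B₁ τ) ≠ ∞ := by
    obtain ⟨C, N, -, hC⟩ := ExpGrowth.mul (.const (c := 2) (by simp)) (hB₀.add hB₁)
    exact ((hC τ).trans_lt ENNReal.ofReal_lt_top).ne
  rw [← ENNReal.mul_le_mul_iff_right (ENNReal.ofReal_pos.2 hc).ne' ENNReal.ofReal_ne_top,
    mul_left_comm, sobolevSq_eq_lintegral_kFunctional hθ, sobolevSq_eq_lintegral_kFunctional hθ,
    ← lintegral_const_mul' _ _ hB]
  refine setLIntegral_mono' measurableSet_Ioi fun s hs => ?_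
  rw [mul_left_comm]
  refine mul_le_mul_right ?_ _
  obtain ⟨g, h, hf, hk⟩ := exists_add_eq_kFunctional hs f
  rw [← hk, hf, symbolMul_add]
  refine (kFunctional_add_le hs _ _).trans ?_
  rw [mul_assoc]
  refine mul_le_mul_right ?_ _
  rw [mul_add]
  refine add_le_add ?_ ?_
  · exact (h₀ τ g).trans (by gcongr; exact le_self_add)
  · rw [mul_left_comm]
    gcongr
    exact (h₁ τ h).trans (by gcongr; exact le_add_self)

lemma symbolMulBounded_of_nonneg {a : ℝ} (ha : 0 ≤ a) : SymbolMulBounded n a := by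
  have h (k : ℕ) (θ : ℝ) (hθ : θ ∈ Set.Ico (0 : ℝ) 1) : SymbolMulBounded n (θ + k) := by
    induction k with
    | zero =>
      rw [Nat.cast_zero, add_zero]
      rcases hθ.1.eq_or_lt with rfl | h
      · exact symbolMulBounded_zero
      · exact symbolMulBounded_of_mem_Ioo ⟨h, hθ.2⟩
    | succ k ih => simpa [add_assoc] using ih.add_one
  simpa using h ⌊a⌋₊ (a - ⌊a⌋₊) ⟨by simpa using Nat.floor_le ha,
    by linarith [Nat.lt_floor_add_one a]⟩

end KFunctional

section ExponentialIntegral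

lemma Real.exp_mul_le_exp_neg_add_exp {x t : ℝ} (hx : x ∈ Set.Icc (-1 : ℝ) 2) :
    Real.exp (x * t) ≤ Real.exp (-t) + Real.exp (2 * t) := by
  rcases le_total 0 t with ht | ht
  · refine (Real.exp_le_exp.2 ?_).trans (le_add_of_nonneg_left (Real.exp_pos _).le)
    nlinarith [hx.2]
  · refine (Real.exp_le_exp.2 ?_).trans (le_add_of_nonneg_right (Real.exp_pos _).le)
    nlinarith [hx.1]

lemma Real.abs_mul_exp_mul_le {x t : ℝ} (hx : x ∈ Set.Icc (-1 / 2 : ℝ) (3 / 2)) :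
    |t| * Real.exp (x * t) ≤ 2 * (Real.exp (-t) + Real.exp (2 * t)) := by
  have h : |t| ≤ 2 * Real.exp (|t| / 2) := by linarith [Real.add_one_le_exp (|t| / 2)]
  have h' : |t| / 2 + x * t ≤ max (-t) (2 * t) := by
    rcases le_total 0 t with ht | ht
    · rw [abs_of_nonneg ht]
      refine le_max_of_le_right ?_
      nlinarith [hx.2]
    · rw [abs_of_nonpos ht]
      refine le_max_of_le_left ?_
      nlinarith [hx.1]
  calc |t| * Real.exp (x * t) ≤ 2 * Real.exp (|t| / 2) * Real.exp (x * t) := by gcongr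
    _ = 2 * Real.exp (|t| / 2 + x * t) := by rw [Real.exp_add]; ring
    _ ≤ 2 * Real.exp (max (-t) (2 * t)) := by gcongr
    _ ≤ 2 * (Real.exp (-t) + Real.exp (2 * t)) := by
      gcongr
      rcases max_choice (-t) (2 * t) with h | h <;> rw [h]
      · exact le_add_of_nonneg_right (Real.exp_pos _).le
      · exact le_add_of_nonneg_left (Real.exp_pos _).le

variable {P : Type*} {φ : P → ℝ} {k : P → ℂ}

lemma norm_cexp_mul_le {z : ℂ} (hz : z.re ∈ Set.Icc (-1 : ℝ) 2) (p : P) :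
    ‖Complex.exp (z * φ p) * k p‖ ≤
      Real.exp (-φ p) * ‖k p‖ + Real.exp (2 * φ p) * ‖k p‖ := by
  rw [norm_mul, Complex.norm_exp, Complex.re_mul_ofReal, ← add_mul]
  gcongr
  exact Real.exp_mul_le_exp_neg_add_exp hz

variable [MeasurableSpace P] {ν : Measure P}

lemma aestronglyMeasurable_cexp_mul (hφ : Measurable φ) (hk : AEStronglyMeasurable k ν) (z : ℂ) :
    AEStronglyMeasurable (fun p => Complex.exp (z * φ p) * k p) ν :=
  (by fun_prop : Measurable fun p => Complex.exp (z * φ p)).aestronglyMeasurable.mul hk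

lemma integrable_cexp_mul (hφ : Measurable φ) (hk : AEStronglyMeasurable k ν)
    (h₁ : Integrable (fun p => Real.exp (-φ p) * ‖k p‖) ν)
    (h₂ : Integrable (fun p => Real.exp (2 * φ p) * ‖k p‖) ν)
    {z : ℂ} (hz : z.re ∈ Set.Icc (-1 : ℝ) 2) :
    Integrable (fun p => Complex.exp (z * φ p) * k p) ν :=
  (h₁.add h₂).mono' (aestronglyMeasurable_cexp_mul hφ hk z)
    (.of_forall fun p => norm_cexp_mul_le hz p)

lemma norm_integral_cexp_mul_le
    (h₁ : Integrable (fun p => Real.exp (-φ p) * ‖k p‖) ν)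
    (h₂ : Integrable (fun p => Real.exp (2 * φ p) * ‖k p‖) ν)
    {z : ℂ} (hz : z.re ∈ Set.Icc (-1 : ℝ) 2) :
    ‖∫ p, Complex.exp (z * φ p) * k p ∂ν‖ ≤
      ∫ p, Real.exp (-φ p) * ‖k p‖ + Real.exp (2 * φ p) * ‖k p‖ ∂ν :=
  norm_integral_le_of_norm_le (h₁.add h₂) (.of_forall fun p => norm_cexp_mul_le hz p)

lemma differentiableAt_integral_cexp_mul (hφ : Measurable φ) (hk : AEStronglyMeasurable k ν)
    (h₁ : Integrable (fun p => Real.exp (-φ p) * ‖k p‖) ν)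
    (h₂ : Integrable (fun p => Real.exp (2 * φ p) * ‖k p‖) ν)
    {z : ℂ} (hz : z.re ∈ Set.Icc (0 : ℝ) 1) :
    DifferentiableAt ℂ (fun z : ℂ => ∫ p, Complex.exp (z * φ p) * k p ∂ν) z := by
  have hs : Complex.re ⁻¹' Set.Ioo (-1 / 2 : ℝ) (3 / 2) ∈ nhds z :=
    (isOpen_Ioo.preimage Complex.continuous_re).mem_nhds
      ⟨by linarith [hz.1], by linarith [hz.2]⟩
  refine (hasDerivAt_integral_of_dominated_loc_of_deriv_le hs
    (.of_forall fun w => aestronglyMeasurable_cexp_mul hφ hk w)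
    (integrable_cexp_mul hφ hk h₁ h₂ ⟨by linarith [hz.1], by linarith [hz.2]⟩)
    (F' := fun w p => Complex.exp (w * φ p) * φ p * k p)
    (bound := fun p => 2 * (Real.exp (-φ p) * ‖k p‖ + Real.exp (2 * φ p) * ‖k p‖))
    ?_ ?_ ((h₁.add h₂).const_mul 2) ?_).2.differentiableAt
  · exact (by fun_prop :
      Measurable fun p => Complex.exp (z * φ p) * φ p).aestronglyMeasurable.mul hk
  · refine .of_forall fun p w hw => ?_
    rw [norm_mul, norm_mul, Complex.norm_exp, Complex.re_mul_ofReal, Complex.norm_real,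
      Real.norm_eq_abs, ← add_mul, ← mul_assoc, mul_comm (Real.exp _)]
    exact mul_le_mul_of_nonneg_right (Real.abs_mul_exp_mul_le ⟨hw.1.le, hw.2.le⟩) (norm_nonneg _)
  · refine .of_forall fun p w _ => ?_
    simpa using ((hasDerivAt_id w).mul_const (φ p : ℂ)).cexp.mul_const (k p)

end ExponentialIntegral

section Weighted

variable {n : ℕ}

/-- Multiplication by `(1 + ‖x‖ ^ 2) ^ r` on Schwartz functions. -/
noncomputable def weightMul (r : ℝ) (f : 𝓢(EuclideanSpace ℝ (Fin n), ℂ)) :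
    𝓢(EuclideanSpace ℝ (Fin n), ℂ) :=
  SchwartzMap.smulLeftCLM ℂ (fun x => sqBracket x ^ r) f

lemma weightMul_apply (r : ℝ) (f : 𝓢(EuclideanSpace ℝ (Fin n), ℂ))
    (x : EuclideanSpace ℝ (Fin n)) : weightMul r f x = (sqBracket x ^ r) • f x :=
  SchwartzMap.smulLeftCLM_apply_apply (hasTemperateGrowth_sqBracket_rpow r) f x

lemma norm_weightMul_apply (r : ℝ) (f : 𝓢(EuclideanSpace ℝ (Fin n), ℂ))
    (x : EuclideanSpace ℝ (Fin n)) : ‖weightMul r f x‖ = sqBracket x ^ r * ‖f x‖ := by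
  rw [weightMul_apply, norm_smul,
    Real.norm_of_nonneg (Real.rpow_pos_of_pos (sqBracket_pos x) r).le]

lemma weightMul_zero (f : 𝓢(EuclideanSpace ℝ (Fin n), ℂ)) : weightMul 0 f = f := by
  ext x
  simp [weightMul_apply]

/-- The Sobolev norm of order `a`. -/
noncomputable def sobolevNorm (a : ℝ) (f : 𝓢(EuclideanSpace ℝ (Fin n), ℂ)) : ℝ≥0∞ :=
  eLpNorm (weightMul (a / 2) (𝓕 f)) 2 volume

lemma sobolevNorm_ne_top (a : ℝ) (f : 𝓢(EuclideanSpace ℝ (Fin n), ℂ)) : sobolevNorm a f ≠ ∞ :=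
  (SchwartzMap.eLpNorm_lt_top _ _ _).ne

lemma sobolevNorm_sq (a : ℝ) (f : 𝓢(EuclideanSpace ℝ (Fin n), ℂ)) :
    sobolevNorm a f ^ 2 = sobolevSq a f := by
  rw [sobolevNorm, eLpNorm_two_sq, sobolevSq]
  refine lintegral_congr fun ξ => ?_
  have hw := sqBracket_pos ξ
  rw [← ofReal_norm, norm_weightMul_apply, ENNReal.ofReal_mul (by positivity), ofReal_norm,
    mul_pow, ← ENNReal.ofReal_pow (by positivity), ← Real.rpow_natCast, ← Real.rpow_mul hw.le]
  simp

lemma sobolevNorm_zero (f : 𝓢(EuclideanSpace ℝ (Fin n), ℂ)) :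
    sobolevNorm 0 f = eLpNorm f 2 volume := by
  rw [sobolevNorm, zero_div, weightMul_zero, SchwartzMap.eLpNorm_fourier]

lemma SchwartzMap.eLpNorm_fourierInv (f : 𝓢(EuclideanSpace ℝ (Fin n), ℂ)) :
    eLpNorm (𝓕⁻ f : 𝓢(EuclideanSpace ℝ (Fin n), ℂ)) 2 volume = eLpNorm f 2 volume := by
  rw [← SchwartzMap.eLpNorm_fourier, FourierTransform.fourier_fourierInv_eq]

lemma coe_weightMul (r : ℝ) (f : 𝓢(EuclideanSpace ℝ (Fin n), ℂ)) :
    ⇑(weightMul r f) = fun x => ((1 + ‖x‖ ^ 2) ^ r : ℝ) • f x :=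
  funext (weightMul_apply r f)

/-- The product of an imaginary power of `1 + ‖x‖ ^ 2` and `(1 + ‖x‖ ^ 2) ^ ((1 - z.re) * b / 2)`
with `f`, so that the total exponent is `(1 - z) * b / 2` up to a constant imaginary power. -/
noncomputable def weightFamily (b : ℝ) (f : 𝓢(EuclideanSpace ℝ (Fin n), ℂ)) (z : ℂ) :
    𝓢(EuclideanSpace ℝ (Fin n), ℂ) :=
  symbolMul (fun _ => 1) (-z.im * (b / 2)) (weightMul ((1 - z.re) * b / 2) f)

lemma weightFamily_apply (b : ℝ) (f : 𝓢(EuclideanSpace ℝ (Fin n), ℂ)) (z : ℂ)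
    (x : EuclideanSpace ℝ (Fin n)) :
    weightFamily b f z x =
      Complex.exp (z * (-(b / 2) * Real.log (sqBracket x) : ℝ)) * weightMul (b / 2) f x := by
  have hw := sqBracket_pos x
  rw [weightFamily, (IsSymbol.const 1).symbolMul_apply, weightMul_apply, weightMul_apply, one_mul,
    Complex.real_smul, Complex.real_smul, ← mul_assoc, ← mul_assoc, Real.rpow_def_of_pos hw,
    Real.rpow_def_of_pos hw, imagPower, Complex.ofReal_exp, Complex.ofReal_exp, ← Complex.exp_add,
    ← Complex.exp_add]
  congr 2
  conv_rhs => rw [← Complex.re_add_im z]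
  push_cast
  ring

/-- The phase function of the analytic family. -/
noncomputable def phase (a b : ℝ) (p : EuclideanSpace ℝ (Fin n) × EuclideanSpace ℝ (Fin n)) : ℝ :=
  a / 2 * Real.log (sqBracket p.1) + -(b / 2) * Real.log (sqBracket p.2)

/-- The amplitude of the analytic family, in the variables `(ξ, x)`. -/
noncomputable def amplitude (v h : 𝓢(EuclideanSpace ℝ (Fin n), ℂ))
    (p : EuclideanSpace ℝ (Fin n) × EuclideanSpace ℝ (Fin n)) : ℂ :=
  v p.1 * (Real.fourierChar (-inner ℝ p.2 p.1) • h p.2)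

lemma measurable_phase (a b : ℝ) : Measurable (phase (n := n) a b) := by
  unfold phase
  fun_prop

lemma norm_amplitude (v h : 𝓢(EuclideanSpace ℝ (Fin n), ℂ))
    (p : EuclideanSpace ℝ (Fin n) × EuclideanSpace ℝ (Fin n)) :
    ‖amplitude v h p‖ = ‖v p.1‖ * ‖h p.2‖ := by
  rw [amplitude, norm_mul, Circle.norm_smul]

lemma continuous_amplitude (v h : 𝓢(EuclideanSpace ℝ (Fin n), ℂ)) :
    Continuous (amplitude v h) := by
  have h1 := v.continuous
  have h2 := h.continuous
  have h3 := Real.continuous_fourierChar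
  unfold amplitude
  fun_prop

lemma integrable_exp_phase_mul_norm_amplitude (a b c : ℝ)
    (v h : 𝓢(EuclideanSpace ℝ (Fin n), ℂ)) :
    Integrable fun p => Real.exp (c * phase a b p) * ‖amplitude v h p‖ := by
  have := ((weightMul (c * (a / 2)) v).integrable (μ := volume)).norm.mul_prod
    ((weightMul (c * -(b / 2)) h).integrable (μ := volume)).norm
  refine this.congr (.of_forall fun p => ?_)
  have h1 := sqBracket_pos p.1
  have h2 := sqBracket_pos p.2
  dsimp only
  rw [norm_weightMul_apply, norm_weightMul_apply, norm_amplitude, phase,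
    Real.rpow_def_of_pos h1, Real.rpow_def_of_pos h2, mul_mul_mul_comm, ← Real.exp_add]
  congr 2
  ring

/-- The analytic family of pairings in the three lines argument. -/
noncomputable def pairing (a b : ℝ) (v f : 𝓢(EuclideanSpace ℝ (Fin n), ℂ)) (z : ℂ) : ℂ :=
  ∫ p, Complex.exp (z * phase a b p) * amplitude v (weightMul (b / 2) f) p

lemma differentiableAt_pairing (a b : ℝ) (v f : 𝓢(EuclideanSpace ℝ (Fin n), ℂ)) {z : ℂ}
    (hz : z.re ∈ Set.Icc (0 : ℝ) 1) : DifferentiableAt ℂ (pairing a b v f) z :=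
  differentiableAt_integral_cexp_mul (measurable_phase a b)
    (continuous_amplitude _ _).aestronglyMeasurable
    (by simpa using integrable_exp_phase_mul_norm_amplitude a b (-1) v (weightMul (b / 2) f))
    (integrable_exp_phase_mul_norm_amplitude a b 2 v (weightMul (b / 2) f)) hz

lemma exists_norm_pairing_le (a b : ℝ) (v f : 𝓢(EuclideanSpace ℝ (Fin n), ℂ)) :
    ∃ M, ∀ z : ℂ, z.re ∈ Set.Icc (0 : ℝ) 1 → ‖pairing a b v f z‖ ≤ M :=
  ⟨_, fun _ hz => norm_integral_cexp_mul_le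
    (by simpa using integrable_exp_phase_mul_norm_amplitude a b (-1) v (weightMul (b / 2) f))
    (integrable_exp_phase_mul_norm_amplitude a b 2 v (weightMul (b / 2) f))
    ⟨by linarith [hz.1], by linarith [hz.2]⟩⟩

lemma pairing_eq (a b : ℝ) (v f : 𝓢(EuclideanSpace ℝ (Fin n), ℂ)) {z : ℂ}
    (hz : z.re ∈ Set.Icc (0 : ℝ) 1) :
    pairing a b v f z = ∫ ξ, v ξ *
      (Complex.exp (z * (a / 2 * Real.log (sqBracket ξ) : ℝ)) * 𝓕 (weightFamily b f z) ξ) := by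
  have h := integrable_cexp_mul (measurable_phase a b)
    (continuous_amplitude v (weightMul (b / 2) f)).aestronglyMeasurable
    (by simpa using integrable_exp_phase_mul_norm_amplitude a b (-1) v (weightMul (b / 2) f))
    (integrable_exp_phase_mul_norm_amplitude a b 2 v (weightMul (b / 2) f))
    (z := z) ⟨by linarith [hz.1], by linarith [hz.2]⟩
  rw [pairing, Measure.volume_eq_prod, integral_prod _ h]
  congr with ξ
  rw [SchwartzMap.fourier_coe, Real.fourier_eq, ← mul_assoc, ← integral_const_mul]
  congr with x
  rw [weightFamily_apply, phase, amplitude, Circle.smul_def, Circle.smul_def, smul_eq_mul,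
    smul_eq_mul, Complex.ofReal_add, mul_add, Complex.exp_add]
  ring

lemma norm_cexp_mul_log_sqBracket (a : ℝ) (z : ℂ) (ξ : EuclideanSpace ℝ (Fin n)) :
    ‖Complex.exp (z * (a / 2 * Real.log (sqBracket ξ) : ℝ))‖ = sqBracket ξ ^ (z.re * a / 2) := by
  rw [Complex.norm_exp, Complex.re_mul_ofReal, Real.rpow_def_of_pos (sqBracket_pos ξ)]
  congr 1
  ring

lemma enorm_pairing_le (a b : ℝ) (v f : 𝓢(EuclideanSpace ℝ (Fin n), ℂ)) {z : ℂ}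
    (hz : z.re ∈ Set.Icc (0 : ℝ) 1) :
    ‖pairing a b v f z‖ₑ ≤ eLpNorm v 2 volume * sobolevNorm (z.re * a) (weightFamily b f z) := by
  rw [pairing_eq a b v f hz]
  refine (enorm_integral_le_lintegral_enorm _).trans ?_
  rw [← eLpNorm_one_eq_lintegral_enorm]
  have hm : Measurable fun ξ : EuclideanSpace ℝ (Fin n) =>
      Complex.exp (z * (a / 2 * Real.log (sqBracket ξ) : ℝ)) * 𝓕 (weightFamily b f z) ξ := by
    have := (𝓕 (weightFamily b f z)).continuous.measurable
    fun_prop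
  refine (eLpNorm_smul_le_mul_eLpNorm (p := 2) (q := 2) hm.aestronglyMeasurable
    v.continuous.aestronglyMeasurable).trans_eq ?_
  rw [sobolevNorm]
  congr 1
  refine eLpNorm_congr_norm_ae (.of_forall fun ξ => ?_)
  rw [norm_mul, norm_cexp_mul_log_sqBracket, norm_weightMul_apply]

end Weighted

section Interpolation

variable {n : ℕ}

lemma norm_pairing_le (a b : ℝ) (v f : 𝓢(EuclideanSpace ℝ (Fin n), ℂ)) {z : ℂ}
    (hz : z.re ∈ Set.Icc (0 : ℝ) 1) :
    ‖pairing a b v f z‖ ≤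
      (eLpNorm v 2 volume).toReal * (sobolevNorm (z.re * a) (weightFamily b f z)).toReal := by
  rw [← ENNReal.toReal_mul, ← toReal_enorm]
  exact ENNReal.toReal_mono (ENNReal.mul_ne_top (v.eLpNorm_lt_top _ _).ne (sobolevNorm_ne_top _ _))
    (enorm_pairing_le a b v f hz)

lemma sobolevNorm_zero_weightFamily (b : ℝ) (f : 𝓢(EuclideanSpace ℝ (Fin n), ℂ)) {z : ℂ}
    (hz : z.re = 0) :
    sobolevNorm 0 (weightFamily b f z) = eLpNorm (weightMul (b / 2) f) 2 volume := by
  rw [sobolevNorm_zero]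
  refine eLpNorm_congr_norm_ae (.of_forall fun x => ?_)
  rw [weightFamily_apply, norm_mul, Complex.norm_exp, Complex.re_mul_ofReal, hz]
  simp

lemma exists_sobolevNorm_weightFamily_le {a : ℝ} (ha : 0 ≤ a) (b : ℝ) :
    ∃ D : ℝ, 0 < D ∧ ∀ (f : 𝓢(EuclideanSpace ℝ (Fin n), ℂ)) (z : ℂ), z.re = 1 →
      Real.exp (1 - z.im ^ 2) * (sobolevNorm a (weightFamily b f z)).toReal ≤
        D * (sobolevNorm a f).toReal := by
  obtain ⟨B, ⟨C, N, hC, hB⟩, hBf⟩ := symbolMulBounded_of_nonneg (n := n) ha _ (.const 1)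
  refine ⟨√(C * Real.exp (2 + (N * (b / 2)) ^ 2) + 1), by positivity, fun f z hz => ?_⟩
  rw [← sq_le_sq₀ (by positivity) (by positivity), mul_pow, mul_pow, Real.sq_sqrt (by positivity)]
  have h : (sobolevNorm a (weightFamily b f z)).toReal ^ 2 ≤
      C * Real.exp (N * |-z.im * (b / 2)|) * (sobolevNorm a f).toReal ^ 2 := by
    have h := (hBf (-z.im * (b / 2)) f).trans (mul_le_mul_left (hB _) _)
    rw [← ENNReal.toReal_pow, ← ENNReal.toReal_pow,
      ← ENNReal.toReal_ofReal (r := C * _) (by positivity), ← ENNReal.toReal_mul, sobolevNorm_sq,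
      sobolevNorm_sq]
    refine ENNReal.toReal_mono (ENNReal.mul_ne_top ENNReal.ofReal_ne_top ?_) ?_
    · rw [← sobolevNorm_sq]
      exact ENNReal.pow_ne_top (sobolevNorm_ne_top _ _)
    · simpa [weightFamily, hz, weightMul_zero] using h
  refine (mul_le_mul_of_nonneg_left h (by positivity)).trans ?_
  rw [← mul_assoc]
  refine mul_le_mul_of_nonneg_right ?_ (by positivity)
  rw [mul_left_comm, ← Real.exp_nat_mul, ← Real.exp_add]
  refine le_add_of_le_of_nonneg (mul_le_mul_of_nonneg_left (Real.exp_le_exp.2 ?_) hC) zero_le_one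
  rw [abs_mul, abs_neg]
  have h₁ : (N * |b / 2|) ^ 2 = (N * (b / 2)) ^ 2 := by rw [mul_pow, sq_abs, mul_pow]
  have h₂ : |z.im| ^ 2 = z.im ^ 2 := sq_abs _
  rw [← h₁, ← h₂]
  push_cast
  nlinarith [sq_nonneg (N * |b / 2| - |z.im|), sq_nonneg (N * |b / 2|), sq_nonneg |z.im|]

lemma exists_norm_pairing_le_rpow {a θ : ℝ} (ha : 0 ≤ a) (b : ℝ) (hθ : θ ∈ Set.Ioo (0 : ℝ) 1) :
    ∃ C : ℝ, 0 < C ∧ ∀ v f : 𝓢(EuclideanSpace ℝ (Fin n), ℂ),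
      ‖pairing a b v f θ‖ ≤ C * (eLpNorm v 2 volume).toReal *
        (eLpNorm (weightMul (b / 2) f) 2 volume).toReal ^ (1 - θ) *
          (sobolevNorm a f).toReal ^ θ := by
  obtain ⟨D, hD, hDf⟩ := exists_sobolevNorm_weightFamily_le (n := n) ha b
  refine ⟨D ^ θ, by positivity, fun v f => ?_⟩
  set V := (eLpNorm v 2 volume).toReal
  set X := (eLpNorm (weightMul (b / 2) f) 2 volume).toReal
  set Y := (sobolevNorm a f).toReal
  have hV : 0 ≤ V := ENNReal.toReal_nonneg
  have hX : 0 ≤ X := ENNReal.toReal_nonneg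
  have hY : 0 ≤ Y := ENNReal.toReal_nonneg
  have hexp (z : ℂ) : ‖Complex.exp (z ^ 2)‖ = Real.exp (z.re ^ 2 - z.im ^ 2) := by
    rw [Complex.norm_exp, pow_two, Complex.mul_re, pow_two, pow_two]
  let G : ℂ → ℂ := fun z => Complex.exp (z ^ 2) * pairing a b v f z
  have hclosed : closure (Complex.HadamardThreeLines.verticalStrip 0 1) ⊆
      Complex.HadamardThreeLines.verticalClosedStrip 0 1 :=
    closure_minimal (Set.preimage_mono Set.Ioo_subset_Icc_self)
      (isClosed_Icc.preimage Complex.continuous_re)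
  have hdiff : DiffContOnCl ℂ G (Complex.HadamardThreeLines.verticalStrip 0 1) := by
    refine DifferentiableOn.diffContOnCl fun z hz => DifferentiableAt.differentiableWithinAt ?_
    exact (by fun_prop : DifferentiableAt ℂ (fun z : ℂ => Complex.exp (z ^ 2)) z).mul
      (differentiableAt_pairing a b v f (hclosed hz))
  have hbdd : BddAbove ((norm ∘ G) '' Complex.HadamardThreeLines.verticalClosedStrip 0 1) := by
    obtain ⟨M, hM⟩ := exists_norm_pairing_le a b v f
    refine ⟨Real.exp 1 * M, ?_⟩
    rintro _ ⟨z, hz, rfl⟩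
    simp only [Function.comp, G, norm_mul, hexp]
    gcongr
    · nlinarith [hz.1, hz.2, sq_nonneg z.im]
    · exact hM z hz
  have h₀ : ∀ z ∈ Complex.re ⁻¹' {0}, ‖G z‖ ≤ V * X := by
    intro z hz
    have hz : z.re = 0 := hz
    have h := norm_pairing_le a b v f (z := z) (by simp [hz])
    rw [hz, zero_mul, sobolevNorm_zero_weightFamily b f hz] at h
    rw [norm_mul, hexp, hz]
    refine (mul_le_of_le_one_left (norm_nonneg _) (Real.exp_le_one_iff.2 ?_)).trans h
    nlinarith [sq_nonneg z.im]
  have h₁ : ∀ z ∈ Complex.re ⁻¹' {1}, ‖G z‖ ≤ D * (V * Y) := by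
    intro z hz
    have hz : z.re = 1 := hz
    have h := norm_pairing_le a b v f (z := z) (by simp [hz])
    rw [hz, one_mul] at h
    rw [norm_mul, hexp, hz, one_pow, mul_left_comm]
    refine (mul_le_mul_of_nonneg_left h (Real.exp_pos _).le).trans ?_
    rw [mul_left_comm]
    exact mul_le_mul_of_nonneg_left (hDf f z hz) hV
  have h := Complex.HadamardThreeLines.norm_le_interp_of_mem_verticalClosedStrip₀₁' G (z := θ)
    ⟨hθ.1.le, hθ.2.le⟩ hdiff hbdd h₀ h₁
  rw [Complex.ofReal_re, Real.mul_rpow hV hX, Real.mul_rpow hD.le (by positivity),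
    Real.mul_rpow hV hY] at h
  calc ‖pairing a b v f θ‖ ≤ ‖G θ‖ := by
        rw [norm_mul, hexp]
        refine le_mul_of_one_le_left (norm_nonneg _) (Real.one_le_exp ?_)
        simp [sq_nonneg]
    _ ≤ _ := h
    _ = D ^ θ * (V ^ (1 - θ) * V ^ θ) * X ^ (1 - θ) * Y ^ θ := by ring
    _ = _ := by
      rw [← Real.rpow_add_of_nonneg hV (by linarith [hθ.2]) hθ.1.le, sub_add_cancel, Real.rpow_one]

/-- The complex conjugate of a Schwartz function. -/
noncomputable def conjSchwartz (f : 𝓢(EuclideanSpace ℝ (Fin n), ℂ)) :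
    𝓢(EuclideanSpace ℝ (Fin n), ℂ) :=
  SchwartzMap.postcompCLM (𝕜 := ℝ) (Complex.conjCLE : ℂ →L[ℝ] ℂ) f

lemma eLpNorm_conjSchwartz (f : 𝓢(EuclideanSpace ℝ (Fin n), ℂ)) :
    eLpNorm (conjSchwartz f) 2 volume = eLpNorm f 2 volume :=
  eLpNorm_congr_norm_ae (.of_forall fun x => by simp [conjSchwartz])

lemma pairing_conjSchwartz (a b : ℝ) {θ : ℝ} (hθ : θ ∈ Set.Ioo (0 : ℝ) 1)
    (f : 𝓢(EuclideanSpace ℝ (Fin n), ℂ)) :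
    ‖pairing a b (conjSchwartz (weightMul (θ * a / 2) (𝓕 (weightMul ((1 - θ) * b / 2) f)))) f θ‖ =
      (sobolevNorm (θ * a) (weightMul ((1 - θ) * b / 2) f)).toReal ^ 2 := by
  have hw : weightFamily b f θ = weightMul ((1 - θ) * b / 2) f := by
    ext x
    rw [weightFamily, (IsSymbol.const 1).symbolMul_apply]
    simp [imagPower]
  rw [pairing_eq a b _ f (by simpa using ⟨hθ.1.le, hθ.2.le⟩), hw, ← ENNReal.toReal_pow,
    sobolevNorm, eLpNorm_two_sq]
  set g := weightMul (θ * a / 2) (𝓕 (weightMul ((1 - θ) * b / 2) f)) with hg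
  have h (ξ : EuclideanSpace ℝ (Fin n)) : conjSchwartz g ξ *
      (Complex.exp (θ * (a / 2 * Real.log (sqBracket ξ) : ℝ)) *
        𝓕 (weightMul ((1 - θ) * b / 2) f) ξ) = ((‖g ξ‖ ^ 2 : ℝ) : ℂ) := by
    have hξ : Complex.exp (θ * (a / 2 * Real.log (sqBracket ξ) : ℝ)) *
        𝓕 (weightMul ((1 - θ) * b / 2) f) ξ = g ξ := by
      rw [hg, weightMul_apply (θ * a / 2), Complex.real_smul,
        Real.rpow_def_of_pos (sqBracket_pos ξ), Complex.ofReal_exp]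
      congr 2
      push_cast
      ring
    rw [hξ, Complex.ofReal_pow]
    exact Complex.conj_mul' (g ξ)
  simp_rw [h]
  rw [integral_complex_ofReal, Complex.norm_real,
    Real.norm_of_nonneg (integral_nonneg fun _ => sq_nonneg _),
    integral_eq_lintegral_of_nonneg_ae (.of_forall fun _ => sq_nonneg _)
      (g.continuous.norm.pow 2).aestronglyMeasurable]
  congr 1
  refine lintegral_congr fun ξ => ?_
  rw [ENNReal.ofReal_pow (norm_nonneg _), ofReal_norm]

lemma exists_sobolevNorm_weightMul_le {a θ : ℝ} (ha : 0 ≤ a) (b : ℝ)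
    (hθ : θ ∈ Set.Ioo (0 : ℝ) 1) :
    ∃ C : ℝ, 0 < C ∧ ∀ f : 𝓢(EuclideanSpace ℝ (Fin n), ℂ),
      sobolevNorm (θ * a) (weightMul ((1 - θ) * b / 2) f) ≤ ENNReal.ofReal C *
        eLpNorm (weightMul (b / 2) f) 2 volume ^ (1 - θ) * sobolevNorm a f ^ θ := by
  obtain ⟨C, hC, h⟩ := exists_norm_pairing_le_rpow (n := n) ha b hθ
  refine ⟨C, hC, fun f => ?_⟩
  have h := h (conjSchwartz (weightMul (θ * a / 2) (𝓕 (weightMul ((1 - θ) * b / 2) f)))) f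
  rw [pairing_conjSchwartz a b hθ, eLpNorm_conjSchwartz, ← sobolevNorm] at h
  have hX : eLpNorm (weightMul (b / 2) f) 2 volume ≠ ∞ := (SchwartzMap.eLpNorm_lt_top _ _ _).ne
  have hY := sobolevNorm_ne_top a f
  have h1θ : 0 ≤ 1 - θ := by linarith [hθ.2]
  rw [← ENNReal.toReal_le_toReal (sobolevNorm_ne_top _ _) (ENNReal.mul_ne_top
    (ENNReal.mul_ne_top ENNReal.ofReal_ne_top (ENNReal.rpow_ne_top_of_nonneg h1θ hX))
    (ENNReal.rpow_ne_top_of_nonneg hθ.1.le hY)), ENNReal.toReal_mul, ENNReal.toReal_mul,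
    ENNReal.toReal_ofReal hC.le, ← ENNReal.toReal_rpow, ← ENNReal.toReal_rpow]
  set S := (sobolevNorm (θ * a) (weightMul ((1 - θ) * b / 2) f)).toReal
  rcases (ENNReal.toReal_nonneg : 0 ≤ S).eq_or_lt with hS | hS
  · exact hS.symm.trans_le (by positivity)
  · refine le_of_mul_le_mul_left ?_ hS
    linarith

lemma eLpNorm_Jpot (s : ℝ) (f : 𝓢(EuclideanSpace ℝ (Fin n), ℂ)) :
    eLpNorm (Jpot s f) 2 volume = sobolevNorm s f := by
  have h : Jpot s f = (𝓕⁻ (weightMul (s / 2) (𝓕 f)) : 𝓢(EuclideanSpace ℝ (Fin n), ℂ)) := by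
    rw [SchwartzMap.fourierInv_coe, coe_weightMul, SchwartzMap.fourier_coe]
    rfl
  rw [h, SchwartzMap.eLpNorm_fourierInv, sobolevNorm]

end Interpolation

/-- Weighted interpolation inequality:
‖J^{θa}(⟨x⟩^{(1−θ)b} f)‖_{L²} ≤ C ‖⟨x⟩^{b} f‖_{L²}^{1−θ} ‖J^{a} f‖_{L²}^{θ}
for a, b > 0, θ ∈ (0,1) and Schwartz f, with ⟨x⟩ = (1+|x|²)^{1/2}. -/
theorem stmt_12 (n : ℕ) (a b θ : ℝ) (ha : 0 < a) (hb : 0 < b)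
    (hθ : θ ∈ Set.Ioo (0 : ℝ) 1) :
    ∃ C : ℝ, 0 < C ∧ ∀ f : SchwartzMap (EuclideanSpace ℝ (Fin n)) ℂ,
      eLpNorm (Jpot (θ * a)
          (fun x => ((1 + ‖x‖ ^ 2) ^ ((1 - θ) * b / 2) : ℝ) • f x)) 2 volume
        ≤ ENNReal.ofReal C *
          eLpNorm (fun x => ((1 + ‖x‖ ^ 2) ^ (b / 2) : ℝ) • f x) 2 volume ^ (1 - θ) *
          eLpNorm (Jpot a (⇑f)) 2 volume ^ θ := by
  obtain ⟨C, hC, h⟩ := exists_sobolevNorm_weightMul_le (n := n) ha.le b hθ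
  refine ⟨C, hC, fun f => ?_⟩
  rw [← coe_weightMul, ← coe_weightMul, eLpNorm_Jpot, eLpNorm_Jpot]
  exact h f
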